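/- For any real J, the characteristic polynomial of the Jacobian matrix M = −I + (J/2^(K+1)) A equals (X + 1 − J/2)^(K/2) · (X + 1 + J/2)^(K/2) · (X + 1)^(2^K − K); in particular its eigenvalues are −1 + J/2 with multiplicity K/2, −1 − J/2 with multiplicity K/2, and −1 with multiplicity 2^K − K. -/

import Mathlib

/-- The value ±1 associated to a Boolean sign. -/
noncomputable def sgn (b : Bool) : ℝ := if b then 1 else -1

/-- The `2^K × 2^K` matrix with rows and columns indexed by sign vectors
`u, v ∈ {−1,1}^K` (encoded as `Fin K → Bool`), with entries
`A_{u,v} = Σ_{m=1}^K (−1)^m u_m v_m`. -/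
noncomputable def volcanoA (K : ℕ) : Matrix (Fin K → Bool) (Fin K → Bool) ℝ :=
  Matrix.of fun u v => ∑ m : Fin K, (-1 : ℝ) ^ ((m : ℕ) + 1) * sgn (u m) * sgn (v m)

/-! The matrix factors as `A = S D Sᵀ`, where `S` is the `2^K × K` matrix listing the sign vectors
and `D` is the diagonal matrix of the alternating weights `(-1)^m`. The columns of `S` are
orthogonal of squared norm `2^K`, so `Sᵀ S = 2^K • 1`. As `P Q` and `Q P` have the same
characteristic polynomial up to a power of `X`, the characteristic polynomial of `A` is that of
`2^K • D` times `X ^ (2^K - K)`. -/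

section

open Matrix Polynomial

theorem prod_range_comp_neg_one_pow {R M : Type*} [Monoid R] [HasDistribNeg R] [CommMonoid M]
    (f : R → M) (n : ℕ) :
    ∏ i ∈ Finset.range n, f ((-1) ^ i) = f 1 ^ ((n + 1) / 2) * f (-1) ^ (n / 2) := by
  induction n with
  | zero => simp
  | succ n ih =>
    rw [Finset.prod_range_succ, ih]
    obtain ⟨k, rfl | rfl⟩ := n.even_or_odd'
    · rw [(even_two_mul k).neg_one_pow, show (2 * k + 1 + 1) / 2 = k + 1 by lia,
        show (2 * k + 1) / 2 = k by lia, show 2 * k / 2 = k by lia, pow_succ, mul_right_comm]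
    · rw [(odd_two_mul_add_one k).neg_one_pow, show (2 * k + 1 + 1 + 1) / 2 = k + 1 by lia,
        show (2 * k + 1 + 1) / 2 = k + 1 by lia, show (2 * k + 1) / 2 = k by lia, mul_assoc,
        ← pow_succ]

theorem charpoly_mul_diagonal_mul {m n R : Type*} [Fintype m] [DecidableEq m] [Fintype n]
    [DecidableEq n] [CommRing R] {P : Matrix n m R} {Q : Matrix m n R} {d : m → R}
    (hQP : Q * P = diagonal d) (w : m → R) (hcard : Fintype.card m ≤ Fintype.card n) :
    (P * diagonal w * Q).charpoly =
      X ^ (Fintype.card n - Fintype.card m) * ∏ i, (X - C (d i * w i)) := by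
  rw [charpoly_mul_comm_of_le _ _ hcard, ← Matrix.mul_assoc, hQP, diagonal_mul_diagonal,
    charpoly_diagonal]

theorem sgn_mul_self (b : Bool) : sgn b * sgn b = 1 := by
  cases b <;> simp [sgn]

theorem sgn_not (b : Bool) : sgn (!b) = -sgn b := by
  cases b <;> simp [sgn]

/-- The matrix whose rows are the sign vectors in `{−1, 1}^ι`, each row being indexed by the Boolean
vector that encodes it. Its orthogonal columns diagonalize `volcanoA`. -/
noncomputable def signMatrix (ι : Type*) : Matrix (ι → Bool) ι ℝ :=
  of fun u i => sgn (u i)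

variable {ι : Type*} [Fintype ι] [DecidableEq ι]

theorem sum_sgn_mul_sgn_of_ne {i j : ι} (hij : i ≠ j) :
    ∑ u : ι → Bool, sgn (u i) * sgn (u j) = 0 := by
  -- Flipping the `i`-th sign negates the summand.
  refine Finset.sum_involution (fun u _ => Function.update u i (!u i)) ?_ ?_ ?_ ?_
  · intro u _
    simp [Function.update_of_ne hij.symm, sgn_not]
  · intro u _ _ hfix
    simpa using congrFun hfix i
  · simp
  · simp

theorem signMatrix_transpose_mul_self :
    (signMatrix ι)ᵀ * signMatrix ι = diagonal fun _ => 2 ^ Fintype.card ι := by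
  ext i j
  simp only [signMatrix, mul_apply, transpose_apply, of_apply]
  obtain rfl | hij := eq_or_ne i j
  · simp [sgn_mul_self]
  · rw [sum_sgn_mul_sgn_of_ne hij, diagonal_apply_ne _ hij]

theorem charpoly_signMatrix_mul_diagonal_mul_transpose (w : ι → ℝ) :
    (signMatrix ι * diagonal w * (signMatrix ι)ᵀ).charpoly =
      X ^ (2 ^ Fintype.card ι - Fintype.card ι) * ∏ i, (X - C (2 ^ Fintype.card ι * w i)) := by
  have hcard : Fintype.card ι ≤ Fintype.card (ι → Bool) := by
    simpa using Nat.lt_two_pow_self.le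
  simpa using charpoly_mul_diagonal_mul signMatrix_transpose_mul_self w hcard

theorem smul_volcanoA_eq (c : ℝ) (K : ℕ) :
    c • volcanoA K =
      signMatrix (Fin K) * diagonal (fun m : Fin K => c * (-1) ^ ((m : ℕ) + 1)) *
        (signMatrix (Fin K))ᵀ := by
  ext u v
  rw [mul_apply]
  simp only [volcanoA, signMatrix, Matrix.smul_apply, of_apply, mul_diagonal, transpose_apply,
    smul_eq_mul, Finset.mul_sum]
  exact Finset.sum_congr rfl fun m _ => by ring

theorem charpoly_smul_volcanoA (c : ℝ) (K : ℕ) :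
    (c • volcanoA K).charpoly =
      (X - C (2 ^ K * c)) ^ (K / 2) * (X + C (2 ^ K * c)) ^ ((K + 1) / 2) * X ^ (2 ^ K - K) := by
  have hfactors : ∏ m : Fin K, (X - C (2 ^ K * (c * (-1) ^ ((m : ℕ) + 1)))) =
      (X + C (2 ^ K * c)) ^ ((K + 1) / 2) * (X - C (2 ^ K * c)) ^ (K / 2) := by
    have hprod := prod_range_comp_neg_one_pow (fun s : ℝ => X + C (2 ^ K * c * s)) K
    rw [Finset.prod_range] at hprod
    simpa [pow_succ, mul_assoc, sub_eq_add_neg] using hprod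
  rw [smul_volcanoA_eq, charpoly_signMatrix_mul_diagonal_mul_transpose, Fintype.card_fin, hfactors]
  ring

theorem stmt6_general (K : ℕ) (J : ℝ) :
    (-(1 : Matrix (Fin K → Bool) (Fin K → Bool) ℝ) + (J / 2 ^ (K + 1)) • volcanoA K).charpoly =
      (X + C (1 - J / 2)) ^ (K / 2) * (X + C (1 + J / 2)) ^ ((K + 1) / 2) *
        (X + C 1) ^ (2 ^ K - K) := by
  have hscale : 2 ^ K * (J / 2 ^ (K + 1)) = J / 2 := by
    field_simp
    ring
  have hshift : -(1 : Matrix (Fin K → Bool) (Fin K → Bool) ℝ) + (J / 2 ^ (K + 1)) • volcanoA K =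
      (J / 2 ^ (K + 1)) • volcanoA K - scalar _ 1 := by
    rw [map_one, neg_add_eq_sub]
  rw [hshift, charpoly_sub_scalar, charpoly_smul_volcanoA, hscale]
  simp only [mul_comp, pow_comp, add_comp, sub_comp, X_comp, C_comp, C_add, C_sub]
  ring

end

open Polynomial in
/-- For any real `J`, the characteristic polynomial of the Jacobian
`M = −I + (J/2^(K+1)) A` equals
`(X + 1 − J/2)^(K/2) · (X + 1 + J/2)^(K/2) · (X + 1)^(2^K − K)`: the
eigenvalues of `M` are `−1 + J/2` and `−1 − J/2`, each with multiplicity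
`K/2`, and `−1` with multiplicity `2^K − K`. -/
theorem stmt6 (K : ℕ) (hK : 0 < K) (hKeven : Even K) (J : ℝ) :
    (-(1 : Matrix (Fin K → Bool) (Fin K → Bool) ℝ) + (J / 2 ^ (K + 1)) • volcanoA K).charpoly =
      (X + C (1 - J / 2)) ^ (K / 2) * (X + C (1 + J / 2)) ^ (K / 2) *
        (X + C 1) ^ (2 ^ K - K) := by
  have hhalf : (K + 1) / 2 = K / 2 := by grind
  rw [stmt6_general, hhalf]
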